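/- For every natural number n, the complex geometric algebra G_{n+2}(ℂ) is isomorphic as a ℂ-algebra to the algebra of 2×2 matrices with entries in G_n(ℂ): G_{n+2}(ℂ) ≃ₐ[ℂ] Matrix (Fin 2) (Fin 2) G_n(ℂ) (periodicity 2 of complex geometric algebras). -/

import Mathlib

noncomputable section

/-- The quadratic form `Q_n(z) = Σ_{i<n} z_i²` on `Fin n → ℂ`. -/
def QC (n : ℕ) : QuadraticForm ℂ (Fin n → ℂ) :=
  QuadraticMap.weightedSumSquares ℂ (fun _ : Fin n => (1 : ℂ))

/-- The complex geometric algebra `G_n(ℂ)`. -/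
abbrev GC (n : ℕ) : Type := CliffordAlgebra (QC n)

/-!
Over any commutative ring, adding a hyperbolic plane `H` to a quadratic form `Q` turns the Clifford
algebra into `2 × 2` matrices over `Cl(Q)`. The map `(m, a, b) ↦ !![m, a; b, -m]` squares to
`Q m + a b`, so it extends to `Cl(Q ⊥ H)`. Conversely, the isotropic basis vectors `u`, `w` of `H`
satisfy `u² = w² = 0` and `u w + w u = 1`, so `u w, u, w, w u` are matrix units; they commute with
the twisted vectors `m ⁅u, w⁆`, which generate a copy of `Cl(Q)` because `⁅u, w⁆² = 1`.
When `2` is invertible and `i² = -1`, the form `x² + y² = (x - i y) (x + i y)` is a hyperbolic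
plane.
-/

open CliffordAlgebra QuadraticMap

section MatrixUnits

variable {n A : Type*} [Fintype n] [Semiring A]

/-- A family `e i j` in `A` is a system of matrix units if it multiplies like the standard basis of
`n × n` matrices and its diagonal sums to `1`. -/
structure IsMatrixUnits (e : n → n → A) : Prop where
  mul_same (i j k : n) : e i j * e j k = e i k
  mul_of_ne (i l : n) {j k : n} (hjk : j ≠ k) : e i j * e k l = 0
  sum_diag : ∑ i, e i i = 1

namespace IsMatrixUnits

variable {R B : Type*} [CommSemiring R] [Semiring B] [Algebra R A] [Algebra R B] {e : n → n → A}

lemma sum_mul_sum (he : IsMatrixUnits e) (g : B →ₐ[R] A)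
    (hg : ∀ i j b, Commute (e i j) (g b)) (M N : Matrix n n B) :
    (∑ i, ∑ j, g (M i j) * e i j) * ∑ i, ∑ j, g (N i j) * e i j =
      ∑ i, ∑ j, g ((M * N) i j) * e i j := by
  have mul_term (i j k l : n) : g (M i j) * e i j * (g (N k l) * e k l) =
      g (M i j * N k l) * (e i j * e k l) := by
    rw [(hg i j (N k l)).mul_mul_mul_comm, map_mul]
  have sum_term (i j : n) : ∑ k, ∑ l, g (M i j) * e i j * (g (N k l) * e k l) =
      ∑ l, g (M i j * N j l) * e i l := by
    rw [Fintype.sum_eq_single j fun k hk => Finset.sum_eq_zero fun l _ => by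
      rw [mul_term, he.mul_of_ne i l hk.symm, mul_zero]]
    simp only [mul_term, he.mul_same]
  simp_rw [Finset.sum_mul, Finset.mul_sum, sum_term, Matrix.mul_apply, map_sum, Finset.sum_mul]
  exact Finset.sum_congr rfl fun i _ => Finset.sum_comm

variable [DecidableEq n]

/-- The algebra homomorphism `M ↦ ∑ i j, g (M i j) * e i j` out of a matrix algebra determined by
matrix units `e` and a homomorphism `g` from the coefficients whose values commute with `e`. -/
def lift (he : IsMatrixUnits e) (g : B →ₐ[R] A) (hg : ∀ i j b, Commute (e i j) (g b)) :
    Matrix n n B →ₐ[R] A :=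
  AlgHom.ofLinearMap
    (∑ i, ∑ j, LinearMap.mulRight R (e i j) ∘ₗ g.toLinearMap ∘ₗ Matrix.entryLinearMap R B i j)
    (by simp [Matrix.one_apply, apply_ite g, ite_mul, he.sum_diag])
    (fun M N => by simpa using (he.sum_mul_sum g hg M N).symm)

lemma lift_apply (he : IsMatrixUnits e) (g : B →ₐ[R] A) (hg : ∀ i j b, Commute (e i j) (g b))
    (M : Matrix n n B) : he.lift g hg M = ∑ i, ∑ j, g (M i j) * e i j := by
  simp [lift]

end IsMatrixUnits

end MatrixUnits

section HyperbolicPair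

variable {A : Type*} [Ring A]

/-- Elements `u`, `w` of a ring satisfying the Clifford relations of the isotropic basis vectors of
a hyperbolic plane. -/
structure IsHyperbolicPair (u w : A) : Prop where
  left_sq : u * u = 0
  right_sq : w * w = 0
  mul_add_mul : u * w + w * u = 1

namespace IsHyperbolicPair

variable {u w x : A}

lemma symm (h : IsHyperbolicPair u w) : IsHyperbolicPair w u :=
  ⟨h.right_sq, h.left_sq, by rw [add_comm, h.mul_add_mul]⟩

lemma mul_mul_self (h : IsHyperbolicPair u w) : u * w * u = u := by
  rw [eq_sub_of_add_eq h.mul_add_mul, sub_mul, one_mul, mul_assoc, h.left_sq, mul_zero, sub_zero]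

lemma isMatrixUnits (h : IsHyperbolicPair u w) :
    IsMatrixUnits ![![u * w, u], ![w, w * u]] where
  mul_same i j k := by
    fin_cases i <;> fin_cases j <;> fin_cases k <;>
      simp [← mul_assoc, h.mul_mul_self, h.symm.mul_mul_self]
  mul_of_ne i l j k hjk := by
    have left_sq_mul (x : A) : u * (u * x) = 0 := by rw [← mul_assoc, h.left_sq, zero_mul]
    have right_sq_mul (x : A) : w * (w * x) = 0 := by rw [← mul_assoc, h.right_sq, zero_mul]
    fin_cases i <;> fin_cases j <;> fin_cases k <;> fin_cases l <;>
      simp_all [mul_assoc, h.left_sq, h.right_sq]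
  sum_diag := by simpa using h.mul_add_mul

lemma lie_mul_left (h : IsHyperbolicPair u w) : ⁅u, w⁆ * u = u := by
  rw [Ring.lie_def, sub_mul, h.mul_mul_self, mul_assoc, h.left_sq, mul_zero, sub_zero]

lemma left_mul_lie (h : IsHyperbolicPair u w) : u * ⁅u, w⁆ = -u := by
  rw [Ring.lie_def, mul_sub, ← mul_assoc, ← mul_assoc, h.left_sq, h.mul_mul_self, zero_mul,
    zero_sub]

lemma lie_mul_lie (h : IsHyperbolicPair u w) : ⁅u, w⁆ * ⁅u, w⁆ = 1 := by
  have lie_mul_right : ⁅u, w⁆ * w = -w := by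
    rw [Ring.lie_def, ← neg_sub, ← Ring.lie_def, neg_mul, h.symm.lie_mul_left]
  calc ⁅u, w⁆ * ⁅u, w⁆ = ⁅u, w⁆ * u * w - ⁅u, w⁆ * w * u := by
        simp only [Ring.lie_def, mul_sub, mul_assoc]
    _ = u * w + w * u := by rw [h.lie_mul_left, lie_mul_right, neg_mul, sub_neg_eq_add]
    _ = 1 := h.mul_add_mul

lemma commute_left_mul_lie (h : IsHyperbolicPair u w) (hxu : x * u = -(u * x)) :
    Commute u (x * ⁅u, w⁆) :=
  calc u * (x * ⁅u, w⁆) = -(x * (u * ⁅u, w⁆)) := by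
        rw [← mul_assoc, ← mul_assoc, hxu, neg_mul, neg_neg]
    _ = x * ⁅u, w⁆ * u := by rw [h.left_mul_lie, mul_assoc, h.lie_mul_left, mul_neg, neg_neg]

lemma commute_right_mul_lie (h : IsHyperbolicPair u w) (hxw : x * w = -(w * x)) :
    Commute w (x * ⁅u, w⁆) := by
  rw [Ring.lie_def, ← neg_sub, ← Ring.lie_def, mul_neg]
  exact (h.symm.commute_left_mul_lie hxw).neg_right

end IsHyperbolicPair

lemma commute_lie_of_mul_eq_neg_mul {u w x : A} (hxu : x * u = -(u * x)) (hxw : x * w = -(w * x)) :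
    Commute x ⁅u, w⁆ := by
  simp only [commute_iff_eq, Ring.lie_def, mul_sub, sub_mul, ← mul_assoc, hxu, hxw, neg_mul]
  simp only [mul_assoc, hxu, hxw, mul_neg, neg_neg]

end HyperbolicPair

section ProdHyperbolicPlane

variable {R M : Type*} [CommRing R] [AddCommGroup M] [Module R M]

/-- The hyperbolic plane: the quadratic form `(a, b) ↦ a * b` on `R × R`. -/
def hyperbolicPlane (R : Type*) [CommRing R] : QuadraticForm R (R × R) :=
  linMulLin (LinearMap.fst R R R) (LinearMap.snd R R R)

lemma hyperbolicPlane_apply (x : R × R) : hyperbolicPlane R x = x.1 * x.2 := rfl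

lemma ι_inl_mul_ι_inr {N : Type*} [AddCommGroup N] [Module R N] (Q : QuadraticForm R M)
    (Q' : QuadraticForm R N) (m : M) (x : N) :
    ι (Q.prod Q') (m, 0) * ι (Q.prod Q') (0, x) =
      -(ι (Q.prod Q') (0, x) * ι (Q.prod Q') (m, 0)) :=
  ι_mul_ι_comm_of_isOrtho (IsOrtho.inl_inr m x)

namespace hyperbolicPlane

variable (Q : QuadraticForm R M)

/-- The first isotropic basis vector of the hyperbolic plane, as an element of `Cl(Q ⊥ H)`. -/
def isotropicLeft : CliffordAlgebra (Q.prod (hyperbolicPlane R)) :=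
  ι _ (0, (1, 0))

/-- The second isotropic basis vector of the hyperbolic plane, as an element of `Cl(Q ⊥ H)`. -/
def isotropicRight : CliffordAlgebra (Q.prod (hyperbolicPlane R)) :=
  ι _ (0, (0, 1))

lemma isHyperbolicPair_isotropic : IsHyperbolicPair (isotropicLeft Q) (isotropicRight Q) where
  left_sq := by
    rw [isotropicLeft, ι_sq_scalar]
    simp [hyperbolicPlane_apply]
  right_sq := by
    rw [isotropicRight, ι_sq_scalar]
    simp [hyperbolicPlane_apply]
  mul_add_mul := by
    rw [isotropicLeft, isotropicRight, ι_mul_ι_add_swap]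
    simp [polar, hyperbolicPlane_apply]

lemma ι_eq_ι_inl_add_isotropic (x : M × (R × R)) :
    ι (Q.prod (hyperbolicPlane R)) x =
      ι _ (x.1, 0) + x.2.1 • isotropicLeft Q + x.2.2 • isotropicRight Q := by
  simp only [isotropicLeft, isotropicRight, ← map_smul, ← map_add]
  simp

lemma ι_inl_mul_lie_mul_self (m : M) :
    ι (Q.prod (hyperbolicPlane R)) (m, 0) * ⁅isotropicLeft Q, isotropicRight Q⁆ *
        (ι (Q.prod (hyperbolicPlane R)) (m, 0) * ⁅isotropicLeft Q, isotropicRight Q⁆) =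
      algebraMap R _ (Q m) := by
  have hcomm : Commute (ι (Q.prod (hyperbolicPlane R)) (m, 0))
      ⁅isotropicLeft Q, isotropicRight Q⁆ :=
    commute_lie_of_mul_eq_neg_mul (ι_inl_mul_ι_inr ..) (ι_inl_mul_ι_inr ..)
  rw [hcomm.symm.mul_mul_mul_comm, ι_sq_scalar, (isHyperbolicPair_isotropic Q).lie_mul_lie]
  simp

/-- The copy of `Cl(Q)` inside `Cl(Q ⊥ H)` commuting with the hyperbolic plane: each vector of `Q`
is multiplied by the commutator of the isotropic basis vectors. -/
def twistedInl : CliffordAlgebra Q →ₐ[R] CliffordAlgebra (Q.prod (hyperbolicPlane R)) :=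
  CliffordAlgebra.lift Q
    ⟨LinearMap.mulRight R ⁅isotropicLeft Q, isotropicRight Q⁆ ∘ₗ
      ι (Q.prod (hyperbolicPlane R)) ∘ₗ LinearMap.inl R M (R × R), ι_inl_mul_lie_mul_self Q⟩

lemma twistedInl_ι (m : M) :
    twistedInl Q (ι Q m) = ι _ (m, 0) * ⁅isotropicLeft Q, isotropicRight Q⁆ :=
  lift_ι_apply ..

lemma commute_twistedInl {c : CliffordAlgebra (Q.prod (hyperbolicPlane R))}
    (hc : ∀ m, Commute c (ι _ (m, 0) * ⁅isotropicLeft Q, isotropicRight Q⁆))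
    (b : CliffordAlgebra Q) : Commute c (twistedInl Q b) := by
  induction b using CliffordAlgebra.induction with
  | algebraMap r => simpa using Algebra.commute_algebraMap_right r c
  | ι m => simpa only [twistedInl_ι] using hc m
  | mul a b ha hb => simpa only [map_mul] using ha.mul_right hb
  | add a b ha hb => simpa only [map_add] using ha.add_right hb

lemma commute_isotropicLeft_twistedInl (b : CliffordAlgebra Q) :
    Commute (isotropicLeft Q) (twistedInl Q b) :=
  commute_twistedInl Q
    (fun _ => (isHyperbolicPair_isotropic Q).commute_left_mul_lie (ι_inl_mul_ι_inr ..)) b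

lemma commute_isotropicRight_twistedInl (b : CliffordAlgebra Q) :
    Commute (isotropicRight Q) (twistedInl Q b) :=
  commute_twistedInl Q
    (fun _ => (isHyperbolicPair_isotropic Q).commute_right_mul_lie (ι_inl_mul_ι_inr ..)) b

/-- The homomorphism `M₂(Cl(Q)) → Cl(Q ⊥ H)` given on coefficients by `twistedInl` and on matrix
units by the isotropic basis vectors. -/
def ofMatrix :
    Matrix (Fin 2) (Fin 2) (CliffordAlgebra Q) →ₐ[R]
      CliffordAlgebra (Q.prod (hyperbolicPlane R)) :=
  (isHyperbolicPair_isotropic Q).isMatrixUnits.lift (twistedInl Q) fun i j b => by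
    have hu := commute_isotropicLeft_twistedInl Q b
    have hw := commute_isotropicRight_twistedInl Q b
    fin_cases i <;> fin_cases j
    exacts [hu.mul_left hw, hu, hw, hw.mul_left hu]

lemma ofMatrix_apply (N : Matrix (Fin 2) (Fin 2) (CliffordAlgebra Q)) :
    ofMatrix Q N =
      twistedInl Q (N 0 0) * (isotropicLeft Q * isotropicRight Q) +
        twistedInl Q (N 0 1) * isotropicLeft Q +
      (twistedInl Q (N 1 0) * isotropicRight Q +
        twistedInl Q (N 1 1) * (isotropicRight Q * isotropicLeft Q)) := by
  simp [ofMatrix, IsMatrixUnits.lift_apply]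

/-- The linear map `(m, a, b) ↦ !![m, a; b, -m]`, whose square is `Q m + a * b`. -/
def vectorMatrix : M × (R × R) →ₗ[R] Matrix (Fin 2) (Fin 2) (CliffordAlgebra Q) where
  toFun x := !![ι Q x.1, algebraMap R _ x.2.1; algebraMap R _ x.2.2, -ι Q x.1]
  map_add' x y := by simp [add_comm]
  map_smul' c x := by simp [Algebra.algebraMap_eq_smul_one, mul_smul]

lemma vectorMatrix_apply (x : M × (R × R)) :
    vectorMatrix Q x = !![ι Q x.1, algebraMap R _ x.2.1; algebraMap R _ x.2.2, -ι Q x.1] := rfl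

lemma vectorMatrix_mul_self (x : M × (R × R)) :
    vectorMatrix Q x * vectorMatrix Q x = algebraMap R _ (Q.prod (hyperbolicPlane R) x) := by
  rw [Algebra.algebraMap_eq_smul_one, Matrix.one_fin_two]
  simp [vectorMatrix_apply, hyperbolicPlane_apply, Algebra.algebraMap_eq_smul_one, smul_smul,
    add_smul, mul_comm, add_comm]

/-- The homomorphism `Cl(Q ⊥ H) → M₂(Cl(Q))` extending `vectorMatrix`. -/
def toMatrix :
    CliffordAlgebra (Q.prod (hyperbolicPlane R)) →ₐ[R]
      Matrix (Fin 2) (Fin 2) (CliffordAlgebra Q) :=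
  CliffordAlgebra.lift _ ⟨vectorMatrix Q, vectorMatrix_mul_self Q⟩

lemma toMatrix_ι (x : M × (R × R)) : toMatrix Q (ι _ x) = vectorMatrix Q x :=
  lift_ι_apply ..

lemma toMatrix_isotropicLeft : toMatrix Q (isotropicLeft Q) = !![0, 1; 0, 0] := by
  simp [isotropicLeft, toMatrix_ι, vectorMatrix_apply]

lemma toMatrix_isotropicRight : toMatrix Q (isotropicRight Q) = !![0, 0; 1, 0] := by
  simp [isotropicRight, toMatrix_ι, vectorMatrix_apply]

lemma toMatrix_twistedInl (b : CliffordAlgebra Q) :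
    toMatrix Q (twistedInl Q b) = Matrix.scalar (Fin 2) b := by
  suffices (toMatrix Q).comp (twistedInl Q) = Matrix.scalarAlgHom (Fin 2) R from
    DFunLike.congr_fun this b
  ext m : 2
  simp [twistedInl_ι, toMatrix_ι, vectorMatrix_apply, Ring.lie_def, toMatrix_isotropicLeft,
    toMatrix_isotropicRight, Matrix.diagonal_fin_two]

lemma toMatrix_comp_ofMatrix : (toMatrix Q).comp (ofMatrix Q) = AlgHom.id R _ := by
  ext N i j
  fin_cases i <;> fin_cases j <;>
    simp [ofMatrix_apply, toMatrix_twistedInl, toMatrix_isotropicLeft, toMatrix_isotropicRight]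

lemma ofMatrix_comp_toMatrix : (ofMatrix Q).comp (toMatrix Q) = AlgHom.id R _ := by
  refine CliffordAlgebra.hom_ext (LinearMap.ext fun x => ?_)
  set u := isotropicLeft Q with hu
  set w := isotropicRight Q with hw
  set v := ι (Q.prod (hyperbolicPlane R)) (x.1, 0) with hv
  have diag_eq : v * ⁅u, w⁆ * (u * w) + -(v * ⁅u, w⁆) * (w * u) = v := by
    rw [neg_mul, ← sub_eq_add_neg, ← mul_sub, ← Ring.lie_def, mul_assoc,
      (isHyperbolicPair_isotropic Q).lie_mul_lie, mul_one]
  calc ofMatrix Q (toMatrix Q (ι _ x))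
      = v * ⁅u, w⁆ * (u * w) + x.2.1 • u + (x.2.2 • w + -(v * ⁅u, w⁆) * (w * u)) := by
        simp [toMatrix_ι, ofMatrix_apply, vectorMatrix_apply, twistedInl_ι, Algebra.smul_def,
          hu, hw, hv]
    _ = v * ⁅u, w⁆ * (u * w) + -(v * ⁅u, w⁆) * (w * u) + x.2.1 • u + x.2.2 • w := by abel
    _ = ι _ x := by rw [diag_eq, ← ι_eq_ι_inl_add_isotropic]

/-- `Cl(Q ⊥ H)` is the algebra of `2 × 2` matrices over `Cl(Q)`. -/
def matrixEquiv :
    CliffordAlgebra (Q.prod (hyperbolicPlane R)) ≃ₐ[R]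
      Matrix (Fin 2) (Fin 2) (CliffordAlgebra Q) :=
  AlgEquiv.ofAlgHom (toMatrix Q) (ofMatrix Q) (toMatrix_comp_ofMatrix Q) (ofMatrix_comp_toMatrix Q)

end hyperbolicPlane

end ProdHyperbolicPlane

/-- The factorization `x² + y² = (x - i y) (x + i y)` as an isometry onto the hyperbolic plane. -/
def sqProdSqIsometryEquiv {R : Type*} [CommRing R] [Invertible (2 : R)] {i : R}
    (hi : i * i = -1) :
    ((sq (R := R)).prod sq).IsometryEquiv (hyperbolicPlane R) where
  toFun x := (x.1 - i * x.2, x.1 + i * x.2)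
  invFun y := (⅟2 * (y.1 + y.2), ⅟2 * (i * (y.1 - y.2)))
  map_add' x y := by ext <;> simp <;> ring
  map_smul' c x := by ext <;> simp <;> ring
  left_inv x := by
    ext
    · linear_combination x.1 * invOf_mul_self (2 : R)
    · linear_combination x.2 * invOf_mul_self (2 : R) - ⅟2 * 2 * x.2 * hi
  right_inv y := by
    ext
    · linear_combination y.1 * invOf_mul_self (2 : R) - ⅟2 * (y.1 - y.2) * hi
    · linear_combination y.2 * invOf_mul_self (2 : R) + ⅟2 * (y.1 - y.2) * hi
  map_app' x := by
    simp only [hyperbolicPlane_apply, prod_apply, sq_apply]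
    linear_combination -x.2 * x.2 * hi

/-- Splitting off the first two coordinates of a sum of squares. -/
def sumSquaresSuccSuccIsometryEquiv (R : Type*) [CommRing R] (n : ℕ) :
    (weightedSumSquares R fun _ : Fin (n + 2) => (1 : R)).IsometryEquiv
      ((weightedSumSquares R fun _ : Fin n => (1 : R)).prod ((sq (R := R)).prod sq)) where
  toFun v := (fun i => v i.succ.succ, (v 0, v 1))
  invFun x := Matrix.vecCons x.2.1 (Matrix.vecCons x.2.2 x.1)
  map_add' _ _ := rfl
  map_smul' _ _ := rfl
  left_inv v := by
    ext i
    exact Fin.cases rfl (Fin.cases rfl fun _ => rfl) i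
  right_inv _ := rfl
  map_app' v := by
    simp only [prod_apply, weightedSumSquares_apply, smul_eq_mul, one_mul, sq_apply,
      Fin.sum_univ_succ, Fin.succ_zero_eq_one]
    ring

theorem GC_n2_iso_matrix2_general {R M : Type*} [CommRing R] [Invertible (2 : R)]
    [AddCommGroup M] [Module R M] {i : R} (hi : i * i = -1) (Q : QuadraticForm R M) :
    Nonempty (CliffordAlgebra (Q.prod ((sq (R := R)).prod sq)) ≃ₐ[R]
      Matrix (Fin 2) (Fin 2) (CliffordAlgebra Q)) :=
  ⟨(equivOfIsometry (.prod (.refl Q) (sqProdSqIsometryEquiv hi))).trans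
    (hyperbolicPlane.matrixEquiv Q)⟩

theorem GC_n2_iso_matrix2 (n : ℕ) :
    Nonempty (GC (n + 2) ≃ₐ[ℂ] Matrix (Fin 2) (Fin 2) (GC n)) := by
  exact (GC_n2_iso_matrix2_general Complex.I_mul_I (QC n)).map
    (equivOfIsometry (sumSquaresSuccSuccIsometryEquiv ℂ n)).trans
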